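/- The maps a, b, c, d form a ∗-representation of O(SU_q(1,1)) on D: ⟨aξ, η⟩ = ⟨ξ, dη⟩ and ⟨bξ, η⟩ = q⟨ξ, cη⟩ for all ξ, η ∈ D, and on D the relations ab = qba, ac = qca, bd = qdb, cd = qdc, bc = cb, ad − qbc = id, da − q⁻¹bc = id all hold. -/

import Mathlib

noncomputable section

/-- The inner product `⟨η, ζ⟩ = Σᵢ ⟨η(i), ζ(i)⟩` on the space of finitely supported
functions `ι →₀ H` with values in a complex inner product space `H`. -/
def finsuppInner {ι H : Type*} [NormedAddCommGroup H] [InnerProductSpace ℂ H]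
    (η ζ : ι →₀ H) : ℂ :=
  η.sum fun i x => (inner ℂ x (ζ i) : ℂ)

namespace Stmt14

variable {K : Type*} [NormedAddCommGroup K] [InnerProductSpace ℂ K] [CompleteSpace K]

/-- `(1 + q^{2n}A²)^{1/2}`, the positive square root given by the continuous functional
calculus. -/
def alpha (q : ℝ) (A : K →L[ℂ] K) (n : ℤ) : K →L[ℂ] K :=
  CFC.sqrt (1 + ((q ^ (2 * n) : ℝ) : ℂ) • (A * A))

/-- `a η_n = (1 + q^{2n}A²)^{1/2} η_{n-1}`. -/
def aOp (q : ℝ) (A : K →L[ℂ] K) : Module.End ℂ (ℤ →₀ K) :=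
  Finsupp.lsum ℂ fun n => (Finsupp.lsingle (n - 1)).comp (alpha q A n : K →ₗ[ℂ] K)

/-- `d η_n = (1 + q^{2(n+1)}A²)^{1/2} η_{n+1}`. -/
def dOp (q : ℝ) (A : K →L[ℂ] K) : Module.End ℂ (ℤ →₀ K) :=
  Finsupp.lsum ℂ fun n => (Finsupp.lsingle (n + 1)).comp (alpha q A (n + 1) : K →ₗ[ℂ] K)

/-- `b η_n = q^{n+1} A w* η_n`. -/
def bOp (q : ℝ) (A w : K →L[ℂ] K) : Module.End ℂ (ℤ →₀ K) :=
  Finsupp.lsum ℂ fun n => (Finsupp.lsingle n).comp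
    (((q : ℂ) ^ (n + 1)) • ((A * star w : K →L[ℂ] K) : K →ₗ[ℂ] K))

/-- `c η_n = qⁿ A w η_n`. -/
def cOp (q : ℝ) (A w : K →L[ℂ] K) : Module.End ℂ (ℤ →₀ K) :=
  Finsupp.lsum ℂ fun n => (Finsupp.lsingle n).comp
    (((q : ℂ) ^ n) • ((A * w : K →L[ℂ] K) : K →ₗ[ℂ] K))

end Stmt14

/-!
Write `E` for the diagonal operator `η_n ↦ q^{2n} A² η_n`. All of `a, b, c, d` are weighted shifts,
so every relation is an identity between their operator weights. The weights of `b` and `c` are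
geometric in `n`, so moving them past a shift by `k` produces the factor `q^k`; and since `w` is
unitary and commutes with `A`, one finds `bc = cb = qE`, `da = 1 + E` and `ad = 1 + q²E`.
-/

namespace Stmt14

section WeightedShift

variable {G R M : Type*} [CommSemiring R] [AddCommMonoid M] [Module R M] [TopologicalSpace M]

/-- The operator-weighted shift `η_n ↦ (T n η)_{n+k}` on finitely supported functions `G →₀ M`,
the common form of `a, b, c, d`. Weights are indexed by the source `n`, not by `n + k`. -/
def weightedShift [Add G] (k : G) (T : G → M →L[R] M) : Module.End R (G →₀ M) :=
  Finsupp.lsum R fun n => (Finsupp.lsingle (n + k)).comp (T n : M →ₗ[R] M)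

@[simp]
lemma weightedShift_single [Add G] (k : G) (T : G → M →L[R] M) (n : G) (x : M) :
    weightedShift k T (Finsupp.single n x) = Finsupp.single (n + k) (T n x) := by
  simp [weightedShift]

lemma weightedShift_mul [AddSemigroup G] (k l : G) (S T : G → M →L[R] M) :
    weightedShift k S * weightedShift l T = weightedShift (l + k) fun n => S (n + l) * T n :=
  Finsupp.lhom_ext fun n x => by simp [add_assoc]

lemma weightedShift_zero_one [AddZeroClass G] :
    weightedShift (0 : G) (1 : G → M →L[R] M) = 1 :=
  Finsupp.lhom_ext fun n x => by simp

lemma weightedShift_add [Add G] [ContinuousAdd M] (k : G) (S T : G → M →L[R] M) :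
    weightedShift k (S + T) = weightedShift k S + weightedShift k T :=
  Finsupp.lhom_ext fun n x => by simp

lemma weightedShift_smul [Add G] [ContinuousConstSMul R M] (k : G) (r : R)
    (T : G → M →L[R] M) : weightedShift k (r • T) = r • weightedShift k T :=
  Finsupp.lhom_ext fun n x => by simp

lemma weightedShift_neg_apply [AddGroup G] (k : G) (T : G → M →L[R] M) (ξ : G →₀ M) (n : G) :
    weightedShift (-k) T ξ n = T (n + k) (ξ (n + k)) := by
  induction ξ using Finsupp.induction_linear with
  | zero => simp
  | add ξ η hξ hη => simp [hξ, hη]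
  | single m x =>
    by_cases h : m = n + k
    · simp [h]
    · simp [h, add_neg_eq_iff_eq_add]

end WeightedShift

section GeometricDiagonal

variable {𝕜 M : Type*} [Field 𝕜] [AddCommMonoid M] [Module 𝕜 M] [TopologicalSpace M]
  [ContinuousConstSMul 𝕜 M]

/-- The diagonal operator `η_n ↦ (pⁿ B η)_n`, whose weights form a geometric sequence. Both `b` and
`c`, and their product, are of this form. -/
def geometricDiagonal (p : 𝕜) (B : M →L[𝕜] M) : Module.End 𝕜 (ℤ →₀ M) :=
  weightedShift 0 fun n => p ^ n • B

lemma geometricDiagonal_smul (p r : 𝕜) (B : M →L[𝕜] M) :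
    geometricDiagonal p (r • B) = r • geometricDiagonal p B :=
  Finsupp.lhom_ext fun n x => by simp [geometricDiagonal, smul_comm r]

lemma geometricDiagonal_mul (p r : 𝕜) (B C : M →L[𝕜] M) :
    geometricDiagonal p B * geometricDiagonal r C = geometricDiagonal (p * r) (B * C) :=
  Finsupp.lhom_ext fun n x => by simp [geometricDiagonal, mul_zpow, smul_smul, mul_comm]

lemma geometricDiagonal_mul_weightedShift {p : 𝕜} (hp : p ≠ 0) {B : M →L[𝕜] M} (k : ℤ)
    {T : ℤ → M →L[𝕜] M} (hBT : ∀ n, Commute B (T n)) :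
    geometricDiagonal p B * weightedShift k T =
      p ^ k • (weightedShift k T * geometricDiagonal p B) := by
  refine Finsupp.lhom_ext fun n x => ?_
  have hBTx : B (T n x) = T n (B x) := DFunLike.congr_fun (hBT n).eq x
  simp [geometricDiagonal, hBTx, smul_smul, zpow_add₀ hp, mul_comm]

end GeometricDiagonal

section Adjoint

variable {G H : Type*} [NormedAddCommGroup H] [InnerProductSpace ℂ H]

lemma finsuppInner_smul_right (ξ η : G →₀ H) (r : ℂ) :
    finsuppInner ξ (r • η) = r * finsuppInner ξ η := by
  simp only [finsuppInner, Finsupp.smul_apply, inner_smul_right, Finsupp.sum, Finset.mul_sum]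

lemma finsuppInner_weightedShift_left [Add G] (k : G) (S : G → H →L[ℂ] H) (ξ η : G →₀ H) :
    finsuppInner (weightedShift k S ξ) η = ξ.sum fun n x => inner ℂ (S n x) (η (n + k)) := by
  calc finsuppInner (weightedShift k S ξ) η
      = ξ.sum fun n x =>
          (Finsupp.single (n + k) (S n x)).sum fun m y => (inner ℂ y (η m) : ℂ) :=
        Finsupp.sum_sum_index (fun _ => inner_zero_left _) (fun _ _ _ => inner_add_left _ _ _)
    _ = ξ.sum fun n x => inner ℂ (S n x) (η (n + k)) := by
        simp only [Finsupp.sum_single_index, inner_zero_left]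

lemma finsuppInner_weightedShift [AddGroup G] [CompleteSpace H] {k : G} {S T : G → H →L[ℂ] H}
    (hST : ∀ n, star (S n) = T (n + k)) (ξ η : G →₀ H) :
    finsuppInner (weightedShift k S ξ) η = finsuppInner ξ (weightedShift (-k) T η) := by
  rw [finsuppInner_weightedShift_left, finsuppInner]
  refine Finsupp.sum_congr fun n _ => ?_
  rw [weightedShift_neg_apply, ← hST, ContinuousLinearMap.star_eq_adjoint,
    ContinuousLinearMap.adjoint_inner_right]

lemma finsuppInner_geometricDiagonal [CompleteSpace H] (p : ℂ) (B : H →L[ℂ] H) (ξ η : ℤ →₀ H) :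
    finsuppInner (geometricDiagonal p B ξ) η =
      finsuppInner ξ (geometricDiagonal (star p) (star B) η) := by
  have h := finsuppInner_weightedShift (k := 0) (S := fun n : ℤ => p ^ n • B)
    (T := fun n => star p ^ n • star B) (fun n => by simp [star_smul]) ξ η
  rwa [neg_zero] at h

end Adjoint

variable {K : Type*} [NormedAddCommGroup K] [InnerProductSpace ℂ K]

lemma cOp_eq_geometricDiagonal (q : ℝ) (A w : K →L[ℂ] K) :
    cOp q A w = geometricDiagonal (q : ℂ) (A * w) :=
  Finsupp.lhom_ext fun n x => by simp [cOp, geometricDiagonal]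

variable [CompleteSpace K]

lemma isSelfAdjoint_alpha (q : ℝ) (A : K →L[ℂ] K) (n : ℤ) : IsSelfAdjoint (alpha q A n) :=
  (CFC.sqrt_nonneg _).isSelfAdjoint

lemma alpha_mul_self (q : ℝ) {A : K →L[ℂ] K} (hA : IsSelfAdjoint A) (n : ℤ) :
    alpha q A n * alpha q A n = 1 + ((q : ℂ) ^ 2) ^ n • (A * A) := by
  have h_nonneg : 0 ≤ 1 + ((q ^ (2 * n) : ℝ) : ℂ) • (A * A) := by
    rw [Complex.coe_smul]
    exact add_nonneg zero_le_one
      (smul_nonneg ((even_two_mul n).zpow_nonneg q) hA.mul_self_nonneg)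
  rw [alpha, CFC.sqrt_mul_sqrt_self _ h_nonneg, Complex.ofReal_zpow, zpow_mul, zpow_ofNat]

lemma commute_alpha (q : ℝ) {A B : K →L[ℂ] K} (hBA : Commute B A) (n : ℤ) :
    Commute B (alpha q A n) :=
  (Commute.cfcₙ_nnreal
    ((Commute.one_left B).add_left ((hBA.symm.mul_left hBA.symm).smul_left _)) _).symm

lemma aOp_eq_weightedShift (q : ℝ) (A : K →L[ℂ] K) : aOp q A = weightedShift (-1) (alpha q A) :=
  rfl

lemma dOp_eq_weightedShift (q : ℝ) (A : K →L[ℂ] K) :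
    dOp q A = weightedShift 1 fun n => alpha q A (n + 1) :=
  rfl

lemma bOp_eq_geometricDiagonal {q : ℝ} (hq : q ≠ 0) (A w : K →L[ℂ] K) :
    bOp q A w = geometricDiagonal (q : ℂ) ((q : ℂ) • (A * star w)) :=
  Finsupp.lhom_ext fun n x => by
    simp [bOp, geometricDiagonal, mul_smul, zpow_add_one₀ (Complex.ofReal_ne_zero.mpr hq)]

lemma finsuppInner_aOp (q : ℝ) (A : K →L[ℂ] K) (ξ η : ℤ →₀ K) :
    finsuppInner (aOp q A ξ) η = finsuppInner ξ (dOp q A η) :=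
  finsuppInner_weightedShift (fun n => by
    rw [neg_add_cancel_right, (isSelfAdjoint_alpha q A n).star_eq]) ξ η

lemma finsuppInner_bOp {q : ℝ} (hq : q ≠ 0) {A w : K →L[ℂ] K} (hA : IsSelfAdjoint A)
    (hAw : Commute A w) (ξ η : ℤ →₀ K) :
    finsuppInner (bOp q A w ξ) η = (q : ℂ) * finsuppInner ξ (cOp q A w η) := by
  have h_star : star ((q : ℂ) • (A * star w)) = (q : ℂ) • (A * w) := by
    simp [star_smul, hA.star_eq, hAw.eq]
  rw [bOp_eq_geometricDiagonal hq, cOp_eq_geometricDiagonal, finsuppInner_geometricDiagonal,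
    h_star, geometricDiagonal_smul, LinearMap.smul_apply, finsuppInner_smul_right]
  simp

lemma aOp_mul_geometricDiagonal {q : ℝ} (hq : q ≠ 0) {A B : K →L[ℂ] K} (hBA : Commute B A) :
    aOp q A * geometricDiagonal (q : ℂ) B =
      (q : ℂ) • (geometricDiagonal (q : ℂ) B * aOp q A) := by
  have hqc : (q : ℂ) ≠ 0 := Complex.ofReal_ne_zero.mpr hq
  rw [aOp_eq_weightedShift, geometricDiagonal_mul_weightedShift hqc _ (commute_alpha q hBA),
    zpow_neg_one, smul_inv_smul₀ hqc]

lemma geometricDiagonal_mul_dOp {q : ℝ} (hq : q ≠ 0) {A B : K →L[ℂ] K} (hBA : Commute B A) :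
    geometricDiagonal (q : ℂ) B * dOp q A =
      (q : ℂ) • (dOp q A * geometricDiagonal (q : ℂ) B) := by
  rw [dOp_eq_weightedShift, geometricDiagonal_mul_weightedShift (Complex.ofReal_ne_zero.mpr hq) _
    (fun n => commute_alpha q hBA (n + 1)), zpow_one]

lemma dOp_mul_aOp (q : ℝ) {A : K →L[ℂ] K} (hA : IsSelfAdjoint A) :
    dOp q A * aOp q A = 1 + geometricDiagonal ((q : ℂ) ^ 2) (A * A) := by
  rw [aOp_eq_weightedShift, dOp_eq_weightedShift, weightedShift_mul, geometricDiagonal,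
    ← weightedShift_zero_one, ← weightedShift_add]
  congr 1 with n : 1
  rw [neg_add_cancel_right, alpha_mul_self q hA, Pi.add_apply, Pi.one_apply]

lemma aOp_mul_dOp {q : ℝ} (hq : q ≠ 0) {A : K →L[ℂ] K} (hA : IsSelfAdjoint A) :
    aOp q A * dOp q A = 1 + (q : ℂ) ^ 2 • geometricDiagonal ((q : ℂ) ^ 2) (A * A) := by
  have hq2 : (q : ℂ) ^ 2 ≠ 0 := pow_ne_zero 2 (Complex.ofReal_ne_zero.mpr hq)
  rw [aOp_eq_weightedShift, dOp_eq_weightedShift, weightedShift_mul, geometricDiagonal,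
    ← weightedShift_smul, ← weightedShift_zero_one, ← weightedShift_add]
  congr 1 with n : 1
  rw [alpha_mul_self q hA, zpow_add_one₀ hq2, mul_comm, mul_smul]
  rfl

lemma bOp_mul_cOp {q : ℝ} (hq : q ≠ 0) {A w : K →L[ℂ] K} (hw : star w * w = 1)
    (hAw : Commute A (star w)) :
    bOp q A w * cOp q A w = (q : ℂ) • geometricDiagonal ((q : ℂ) ^ 2) (A * A) := by
  rw [bOp_eq_geometricDiagonal hq, cOp_eq_geometricDiagonal, geometricDiagonal_mul,
    smul_mul_assoc, hAw.symm.mul_mul_mul_comm, hw, mul_one, geometricDiagonal_smul, ← sq]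

lemma cOp_mul_bOp {q : ℝ} (hq : q ≠ 0) {A w : K →L[ℂ] K} (hw : w * star w = 1)
    (hAw : Commute A w) :
    cOp q A w * bOp q A w = (q : ℂ) • geometricDiagonal ((q : ℂ) ^ 2) (A * A) := by
  rw [bOp_eq_geometricDiagonal hq, cOp_eq_geometricDiagonal, geometricDiagonal_mul,
    mul_smul_comm, hAw.symm.mul_mul_mul_comm, hw, mul_one, geometricDiagonal_smul, ← sq]

end Stmt14

open Stmt14 in
theorem stmt_14_general {K : Type*} [NormedAddCommGroup K] [InnerProductSpace ℂ K]
    [CompleteSpace K]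
    (q : ℝ) (hq : q ≠ 0)
    (w A : K →L[ℂ] K) (hw : w ∈ unitary (K →L[ℂ] K)) (hA : IsSelfAdjoint A)
    (hwA : w * A = A * w) :
    (∀ ξ η : ℤ →₀ K, finsuppInner (aOp q A ξ) η = finsuppInner ξ (dOp q A η)) ∧
    (∀ ξ η : ℤ →₀ K,
      finsuppInner (bOp q A w ξ) η = (q : ℂ) * finsuppInner ξ (cOp q A w η)) ∧
    aOp q A * bOp q A w = (q : ℂ) • (bOp q A w * aOp q A) ∧
    aOp q A * cOp q A w = (q : ℂ) • (cOp q A w * aOp q A) ∧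
    bOp q A w * dOp q A = (q : ℂ) • (dOp q A * bOp q A w) ∧
    cOp q A w * dOp q A = (q : ℂ) • (dOp q A * cOp q A w) ∧
    bOp q A w * cOp q A w = cOp q A w * bOp q A w ∧
    aOp q A * dOp q A - (q : ℂ) • (bOp q A w * cOp q A w) = 1 ∧
    dOp q A * aOp q A - (q : ℂ)⁻¹ • (bOp q A w * cOp q A w) = 1 := by
  have hAw : Commute A w := hwA.symm
  have hAw_star : Commute A (star w) := by simpa only [hA.star_eq] using hAw.star_star
  have hbA : Commute ((q : ℂ) • (A * star w)) A :=
    ((Commute.refl A).mul_left hAw_star.symm).smul_left _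
  have hcA : Commute (A * w) A := (Commute.refl A).mul_left hAw.symm
  have hbc := bOp_mul_cOp hq (Unitary.star_mul_self_of_mem hw) hAw_star
  have hcb := cOp_mul_bOp hq (Unitary.mul_star_self_of_mem hw) hAw
  have hb := bOp_eq_geometricDiagonal hq A w
  have hc := cOp_eq_geometricDiagonal q A w
  refine ⟨finsuppInner_aOp q A, finsuppInner_bOp hq hA hAw,
    hb ▸ aOp_mul_geometricDiagonal hq hbA, hc ▸ aOp_mul_geometricDiagonal hq hcA,
    hb ▸ geometricDiagonal_mul_dOp hq hbA, hc ▸ geometricDiagonal_mul_dOp hq hcA,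
    hbc.trans hcb.symm, ?_, ?_⟩
  · rw [aOp_mul_dOp hq hA, hbc, smul_smul, ← sq (q : ℂ), add_sub_cancel_right]
  · rw [dOp_mul_aOp q hA, hbc, inv_smul_smul₀ (Complex.ofReal_ne_zero.mpr hq),
      add_sub_cancel_right]

open Stmt14 in
/-- With `0 < q < 1`, `w` a unitary operator and `A` a bounded self-adjoint
operator on a Hilbert space `K` with `wA = Aw`, the operators `a, b, c, d` defined above
on the space of finitely supported functions `ℤ →₀ K` form a ∗-representation of
`O(SU_q(1,1))`: `⟨aξ, η⟩ = ⟨ξ, dη⟩`, `⟨bξ, η⟩ = q⟨ξ, cη⟩`, and `ab = qba`, `ac = qca`,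
`bd = qdb`, `cd = qdc`, `bc = cb`, `ad - qbc = 1`, `da - q⁻¹bc = 1`. -/
theorem stmt_14 {K : Type*} [NormedAddCommGroup K] [InnerProductSpace ℂ K]
    [CompleteSpace K]
    (q : ℝ) (hq0 : 0 < q) (hq1 : q < 1)
    (w A : K →L[ℂ] K) (hw : w ∈ unitary (K →L[ℂ] K)) (hA : IsSelfAdjoint A)
    (hwA : w * A = A * w) :
    (∀ ξ η : ℤ →₀ K, finsuppInner (aOp q A ξ) η = finsuppInner ξ (dOp q A η)) ∧
    (∀ ξ η : ℤ →₀ K,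
      finsuppInner (bOp q A w ξ) η = (q : ℂ) * finsuppInner ξ (cOp q A w η)) ∧
    aOp q A * bOp q A w = (q : ℂ) • (bOp q A w * aOp q A) ∧
    aOp q A * cOp q A w = (q : ℂ) • (cOp q A w * aOp q A) ∧
    bOp q A w * dOp q A = (q : ℂ) • (dOp q A * bOp q A w) ∧
    cOp q A w * dOp q A = (q : ℂ) • (dOp q A * cOp q A w) ∧
    bOp q A w * cOp q A w = cOp q A w * bOp q A w ∧
    aOp q A * dOp q A - (q : ℂ) • (bOp q A w * cOp q A w) = 1 ∧
    dOp q A * aOp q A - (q : ℂ)⁻¹ • (bOp q A w * cOp q A w) = 1 :=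
  stmt_14_general q hq0.ne' w A hw hA hwA

end
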